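/- arXiv:2303.05421 — 2 statements merged into one kernel-verified Lean document; each statement's English description precedes it below -/
import Mathlib

section
/- (Sequential continuity of the mapping φ₂, part of Lemma 3.8.) Let S be a random variable taking values in A, let (J_k)_{k≥1} and J be measurable functions from A to [0, ∞) such that J_k(S) → J(S) almost surely as k → ∞ and J(S) > 0 almost surely, and let i ∈ {1, …, n} with 0 < E[X_i] < M_i. Let α^k_i > 0 and α_i > 0 be the unique positive solutions of E[I_i(J_k(S)/α^k_i)] = E[X_i] and E[I_i(J(S)/α_i)] = E[X_i]. Then α^k_i → α_i as k → ∞. -/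
open Set Filter Topology MeasureTheory

/-!
Fix a bounded, continuous, strictly increasing `g` on `[0, ∞)`. For a nonnegative random variable
`Y` the map `b ↦ E[g (Y / b)]` is decreasing on `(0, ∞)`, strictly so unless `Y = 0` almost surely.
If `Y i → Y` almost surely, these maps converge pointwise by bounded convergence. When decreasing
functions converge pointwise to a strictly decreasing one, comparing values at the points just
below and just above the solution of an equation for the limit traps the approximate solutions.
-/

section Order

variable {ι α β : Type*} [LinearOrder α] [TopologicalSpace α] [OrderTopology α]
  [LinearOrder β] [TopologicalSpace β] [OrderClosedTopology β]

theorem tendsto_of_tendsto_apply_of_antitoneOn {l : Filter ι} {s : Set α} [hs : s.OrdConnected]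
    {f : ι → α → β} {g : α → β} {x : ι → α} {a : α}
    (hf : ∀ i, AntitoneOn (f i) s) (hg : StrictAntiOn g s)
    (hfg : ∀ b ∈ s, Tendsto (fun i => f i b) l (𝓝 (g b)))
    (hx : ∀ i, x i ∈ s) (ha : a ∈ s) (hfx : Tendsto (fun i => f i (x i)) l (𝓝 (g a))) :
    Tendsto x l (𝓝 a) := by
  refine tendsto_order.2 ⟨fun b hba => ?_, fun b hab => ?_⟩
  · by_cases hb : b ∈ s
    · filter_upwards [hfx.eventually_lt (hfg b hb) (hg hb ha hba)] with i hi
      exact (hf i).reflect_lt (hx i) hb hi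
    · exact .of_forall fun i => not_le.1 fun hxb => hb (hs.out (hx i) ha ⟨hxb, hba.le⟩)
  · by_cases hb : b ∈ s
    · filter_upwards [(hfg b hb).eventually_lt hfx (hg ha hb hab)] with i hi
      exact (hf i).reflect_lt hb (hx i) hi
    · exact .of_forall fun i => not_le.1 fun hbx => hb (hs.out ha (hx i) ⟨hab.le, hbx⟩)

end Order

theorem integral_lt_integral_of_ae_le_of_frequently_lt {Ω : Type*} [MeasurableSpace Ω]
    {μ : Measure Ω} {f g : Ω → ℝ} (hf : Integrable f μ) (hg : Integrable g μ) (hle : f ≤ᵐ[μ] g)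
    (hlt : ∃ᵐ ω ∂μ, f ω < g ω) : ∫ ω, f ω ∂μ < ∫ ω, g ω ∂μ :=
  (integral_mono_ae hf hg hle).lt_of_ne fun heq =>
    hlt (((integral_eq_iff_of_ae_le hf hg hle).1 heq).mono fun _ hω => hω.not_lt)

section ContinuousOnComp

variable {Ω X E : Type*} [MeasurableSpace Ω] {μ : Measure Ω} [TopologicalSpace X]
  [MeasurableSpace X] [OpensMeasurableSpace X] {s : Set X}

theorem aestronglyMeasurable_comp_of_continuousOn [TopologicalSpace E]
    [TopologicalSpace.PseudoMetrizableSpace E] [SecondCountableTopologyEither X E]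
    {f : X → E} {Z : Ω → X} (hf : ContinuousOn f s) (hs : MeasurableSet s)
    (hZ : AEMeasurable Z μ) (hZs : ∀ᵐ ω ∂μ, Z ω ∈ s) :
    AEStronglyMeasurable (fun ω => f (Z ω)) μ := by
  have hmap : (μ.map Z).restrict s = μ.map Z :=
    Measure.restrict_eq_self_of_ae_mem ((ae_map_iff hZ hs).2 hZs)
  exact (hmap ▸ hf.aestronglyMeasurable hs).comp_aemeasurable hZ

variable [NormedAddCommGroup E] [SecondCountableTopologyEither X E] [IsFiniteMeasure μ]
  {f : X → E} {C : ℝ}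

theorem integrable_comp_of_continuousOn_of_norm_le {Z : Ω → X} (hf : ContinuousOn f s)
    (hs : MeasurableSet s) (hC : ∀ z ∈ s, ‖f z‖ ≤ C) (hZ : AEMeasurable Z μ)
    (hZs : ∀ᵐ ω ∂μ, Z ω ∈ s) : Integrable (fun ω => f (Z ω)) μ :=
  .of_bound (aestronglyMeasurable_comp_of_continuousOn hf hs hZ hZs) C
    (hZs.mono fun _ => hC _)

theorem tendsto_integral_comp_of_continuousOn_of_norm_le [NormedSpace ℝ E] {ι : Type*}
    {l : Filter ι} [l.IsCountablyGenerated] {Z : ι → Ω → X} {Z₀ : Ω → X}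
    (hf : ContinuousOn f s) (hs : MeasurableSet s) (hC : ∀ z ∈ s, ‖f z‖ ≤ C)
    (hZ : ∀ i, AEMeasurable (Z i) μ) (hZs : ∀ i, ∀ᵐ ω ∂μ, Z i ω ∈ s)
    (hZ₀s : ∀ᵐ ω ∂μ, Z₀ ω ∈ s) (hlim : ∀ᵐ ω ∂μ, Tendsto (fun i => Z i ω) l (𝓝 (Z₀ ω))) :
    Tendsto (fun i => ∫ ω, f (Z i ω) ∂μ) l (𝓝 (∫ ω, f (Z₀ ω) ∂μ)) := by
  -- Along a sequence the null sets on which `Z i ∉ s` have a common null union.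
  refine tendsto_of_seq_tendsto fun u hu =>
    tendsto_integral_of_dominated_convergence (fun _ => C)
      (fun n => aestronglyMeasurable_comp_of_continuousOn hf hs (hZ (u n)) (hZs (u n)))
      (integrable_const C) (fun n => (hZs (u n)).mono fun _ => hC _) ?_
  filter_upwards [ae_all_iff.2 fun n => hZs (u n), hZ₀s, hlim] with ω hω hω₀ hωlim
  exact (hf _ hω₀).tendsto.comp (tendsto_nhdsWithin_iff.2 ⟨hωlim.comp hu, .of_forall hω⟩)

end ContinuousOnComp

section ScaledIntegral

variable {Ω : Type*} [MeasurableSpace Ω] {μ : Measure Ω} {g : ℝ → ℝ} {Y : Ω → ℝ}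

theorem antitoneOn_integral_comp_div (hg : MonotoneOn g (Ici 0)) (hY : ∀ᵐ ω ∂μ, 0 ≤ Y ω)
    (hint : ∀ b, 0 < b → Integrable (fun ω => g (Y ω / b)) μ) :
    AntitoneOn (fun b => ∫ ω, g (Y ω / b) ∂μ) (Ioi 0) := by
  intro a (ha : 0 < a) b (hb : 0 < b) hab
  refine integral_mono_ae (hint b hb) (hint a ha) (hY.mono fun ω hω => ?_)
  exact hg (div_nonneg hω hb.le) (div_nonneg hω ha.le) (div_le_div_of_nonneg_left hω ha hab)

theorem strictAntiOn_integral_comp_div (hg : StrictMonoOn g (Ici 0)) (hY : ∀ᵐ ω ∂μ, 0 ≤ Y ω)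
    (hYpos : ∃ᵐ ω ∂μ, 0 < Y ω) (hint : ∀ b, 0 < b → Integrable (fun ω => g (Y ω / b)) μ) :
    StrictAntiOn (fun b => ∫ ω, g (Y ω / b) ∂μ) (Ioi 0) := by
  intro a (ha : 0 < a) b (hb : 0 < b) hab
  refine integral_lt_integral_of_ae_le_of_frequently_lt (hint b hb) (hint a ha)
    (hY.mono fun ω hω => ?_) (hYpos.mono fun ω hω => ?_)
  · exact hg.monotoneOn (div_nonneg hω hb.le) (div_nonneg hω ha.le)
      (div_le_div_of_nonneg_left hω ha hab.le)
  · exact hg (div_pos hω hb).le (div_pos hω ha).le (div_lt_div_of_pos_left hω ha hab)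

theorem stmt_7_general [IsFiniteMeasure μ] {ι : Type*} {l : Filter ι} [l.IsCountablyGenerated]
    {C : ℝ} (hgcont : ContinuousOn g (Ici 0)) (hgmono : StrictMonoOn g (Ici 0))
    (hgC : ∀ z, 0 ≤ z → g z ≤ C) {Yk : ι → Ω → ℝ} (hYkmeas : ∀ k, AEMeasurable (Yk k) μ)
    (hYmeas : AEMeasurable Y μ) (hYk : ∀ k, ∀ᵐ ω ∂μ, 0 ≤ Yk k ω) (hY : ∀ᵐ ω ∂μ, 0 ≤ Y ω)
    (hYpos : ∃ᵐ ω ∂μ, 0 < Y ω) (hlim : ∀ᵐ ω ∂μ, Tendsto (fun k => Yk k ω) l (𝓝 (Y ω)))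
    {ak : ι → ℝ} {a : ℝ} (hak : ∀ k, 0 < ak k) (ha : 0 < a)
    (hmean : Tendsto (fun k => ∫ ω, g (Yk k ω / ak k) ∂μ) l (𝓝 (∫ ω, g (Y ω / a) ∂μ))) :
    Tendsto ak l (𝓝 a) := by
  have hbound : ∀ z ∈ Ici 0, ‖g z‖ ≤ max |g 0| |C| := fun z hz =>
    abs_le_max_abs_abs (hgmono.monotoneOn self_mem_Ici hz hz) (hgC z hz)
  have hdiv {Z : Ω → ℝ} (hZ : ∀ᵐ ω ∂μ, 0 ≤ Z ω) {b : ℝ} (hb : 0 < b) :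
      ∀ᵐ ω ∂μ, Z ω / b ∈ Ici 0 := hZ.mono fun _ hω => div_nonneg hω hb.le
  have hint {Z : Ω → ℝ} (hZmeas : AEMeasurable Z μ) (hZ : ∀ᵐ ω ∂μ, 0 ≤ Z ω) (b : ℝ)
      (hb : 0 < b) : Integrable (fun ω => g (Z ω / b)) μ :=
    integrable_comp_of_continuousOn_of_norm_le hgcont measurableSet_Ici hbound
      (hZmeas.div_const b) (hdiv hZ hb)
  have hpointwise (b : ℝ) (hb : 0 < b) :
      Tendsto (fun k => ∫ ω, g (Yk k ω / b) ∂μ) l (𝓝 (∫ ω, g (Y ω / b) ∂μ)) :=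
    tendsto_integral_comp_of_continuousOn_of_norm_le hgcont measurableSet_Ici hbound
      (fun k => (hYkmeas k).div_const b) (fun k => hdiv (hYk k) hb) (hdiv hY hb)
      (hlim.mono fun _ hω => hω.div_const b)
  exact tendsto_of_tendsto_apply_of_antitoneOn
    (fun k => antitoneOn_integral_comp_div hgmono.monotoneOn (hYk k) (hint (hYkmeas k) (hYk k)))
    (strictAntiOn_integral_comp_div hgmono hY hYpos (hint hYmeas hY)) hpointwise hak ha hmean

end ScaledIntegral

/-- sequential continuity of φ₂, part of Lemma 3.8: if
`J_k(S) → J(S)` a.s. with `J(S) > 0` a.s., then the solutions `α^k_i` of the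
fairness equations converge to the solution `α_i` for `J`. -/
theorem stmt_7
    (n : ℕ) (hn : 1 ≤ n) (M : Fin n → ℝ) (hM : ∀ i, 0 < M i)
    (I : Fin n → ℝ → ℝ)
    (hIcont : ∀ i, ContinuousOn (I i) (Ici 0))
    (hImono : ∀ i, StrictMonoOn (I i) (Ici 0))
    (hI0 : ∀ i, I i 0 = 0)
    (hIlt : ∀ i z, 0 ≤ z → I i z < M i)
    (hIlim : ∀ i, Tendsto (I i) atTop (𝓝 (M i)))
    (Ω : Type*) [MeasurableSpace Ω] (P : Measure Ω) [IsProbabilityMeasure P]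
    (S : Ω → ℝ) (hSmeas : Measurable S)
    (hSA : ∀ᵐ ω ∂P, S ω ∈ Ico 0 (∑ i, M i))
    (Jk : ℕ → ℝ → ℝ) (J : ℝ → ℝ)
    (hJkmeas : ∀ k, Measurable (Jk k)) (hJmeas : Measurable J)
    (hJknonneg : ∀ k, ∀ s ∈ Ico 0 (∑ i, M i), 0 ≤ Jk k s)
    (hJnonneg : ∀ s ∈ Ico 0 (∑ i, M i), 0 ≤ J s)
    (hconv : ∀ᵐ ω ∂P, Tendsto (fun k => Jk k (S ω)) atTop (𝓝 (J (S ω))))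
    (hJpos : ∀ᵐ ω ∂P, 0 < J (S ω))
    (i : Fin n) (X : Ω → ℝ) (hXint : Integrable X P)
    (hEX : 0 < ∫ ω, X ω ∂P ∧ ∫ ω, X ω ∂P < M i)
    (αk : ℕ → ℝ) (α : ℝ) (hαk : ∀ k, 0 < αk k) (hα : 0 < α)
    (hfairk : ∀ k, ∫ ω, I i (Jk k (S ω) / αk k) ∂P = ∫ ω, X ω ∂P)
    (hfair : ∫ ω, I i (J (S ω) / α) ∂P = ∫ ω, X ω ∂P) :
    Tendsto αk atTop (𝓝 α) := by
  refine stmt_7_general (hIcont i) (hImono i) (fun z hz => (hIlt i z hz).le)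
    (fun k => ((hJkmeas k).comp hSmeas).aemeasurable) (hJmeas.comp hSmeas).aemeasurable
    (fun k => hSA.mono fun ω hω => hJknonneg k (S ω) hω) (hJpos.mono fun _ => le_of_lt)
    hJpos.frequently hconv hαk hα ?_
  simpa only [Function.comp_apply, hfairk, hfair] using tendsto_const_nhds
end

section
/- (Corollary 4.6, abstract form: global convergence of the normalized iteration.) Let φ : ℝ_{>0}^n → ℝ_{>0}^n be continuous, positively homogeneous of degree 1 (φ(λx) = λφ(x) for all λ > 0), and strongly monotone (x ≤ y componentwise and x ≠ y imply φ(x)_i < φ(y)_i for every i). Define ψ(s) = φ(s)/‖φ(s)‖₁ on the open unit simplex Δ = { s ∈ ℝ_{>0}^n : Σ_{i=1}^n s_i = 1 }, where ‖v‖₁ = Σ_i |v_i|. Suppose φ has an eigenvector α* ∈ Δ, i.e. φ(α*) = λ* α* for some λ* > 0. Then for every α⁰ ∈ Δ the sequence defined by α^{k+1} = ψ(α^k) converges to α*. -/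
open Set Filter Topology

/-!
Rescale `φ` so that the eigenvector `a` becomes a fixed point of a map `T`. The largest coordinate
ratio `max_i x_i / a_i` is nonincreasing along the orbits of `T`, and strictly decreases at `x`
unless `x` is a multiple of `a`. An orbit stays in a compact order interval `[m • a, M • a]`, and by
LaSalle's invariance argument its only cluster point is `c • a`, where `c` is the limit of the
ratio. The passage from the orbit to a cluster point `y` is order-theoretic: for every `s > 1` the
orbit is frequently below `s • y`, so by monotonicity and homogeneity its image is frequently below
`s • T y`. Finally, the normalized iterates of `φ` are the normalizations of the iterates of `T`.
-/

/-- The open positive cone of `ι → ℝ`. -/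
def positiveCone (ι : Type*) : Set (ι → ℝ) := {x | ∀ i, 0 < x i}

/-- Positive homogeneity of degree one on the open positive cone. Values off the cone are
unconstrained. -/
def PosHomogeneous {ι : Type*} (φ : (ι → ℝ) → ι → ℝ) : Prop :=
  ∀ ⦃c : ℝ⦄, 0 < c → ∀ ⦃x⦄, x ∈ positiveCone ι → φ (c • x) = c • φ x

/-- The largest coordinate ratio `max_i x_i / a_i`, which is the Lyapunov function of the iteration
when `a` is the fixed point. -/
noncomputable def maxRatio {ι : Type*} [Fintype ι] [Nonempty ι] (x a : ι → ℝ) : ℝ :=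
  Finset.univ.sup' Finset.univ_nonempty fun i => x i / a i

/-- The normalization `v / ‖v‖₁`, which is `0` at `v = 0`. -/
noncomputable def l1Normalize {ι : Type*} [Fintype ι] (v : ι → ℝ) : ι → ℝ :=
  fun i => v i / ∑ j, |v j|

section PositiveCone

variable {ι : Type*} {x y : ι → ℝ}

theorem smul_mem_positiveCone {c : ℝ} (hc : 0 < c) (hx : x ∈ positiveCone ι) :
    c • x ∈ positiveCone ι :=
  fun i => mul_pos hc (hx i)

theorem mem_positiveCone_of_le (hx : x ∈ positiveCone ι) (hxy : x ≤ y) : y ∈ positiveCone ι :=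
  fun i => (hx i).trans_le (hxy i)

end PositiveCone

section MaxRatio

variable {ι : Type*} [Fintype ι] [Nonempty ι] {x a : ι → ℝ} {c : ℝ}

theorem maxRatio_le_iff (ha : a ∈ positiveCone ι) : maxRatio x a ≤ c ↔ x ≤ c • a := by
  simp [maxRatio, Pi.le_def, div_le_iff₀ (ha _)]

theorem maxRatio_lt_iff (ha : a ∈ positiveCone ι) : maxRatio x a < c ↔ StrongLT x (c • a) := by
  simp [maxRatio, StrongLT, div_lt_iff₀ (ha _)]

theorem le_maxRatio_smul (ha : a ∈ positiveCone ι) : x ≤ maxRatio x a • a :=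
  (maxRatio_le_iff ha).1 le_rfl

theorem maxRatio_pos (hx : x ∈ positiveCone ι) (ha : a ∈ positiveCone ι) : 0 < maxRatio x a := by
  obtain ⟨i⟩ := ‹Nonempty ι›
  exact pos_of_mul_pos_left ((hx i).trans_le (le_maxRatio_smul ha i)) (ha i).le

theorem continuous_maxRatio_left (a : ι → ℝ) : Continuous (maxRatio · a) :=
  Continuous.finset_sup'_apply _ fun i _ => (continuous_apply i).div_const _

end MaxRatio

theorem exists_pos_smul_le {ι : Type*} [Finite ι] [Nonempty ι] {a x : ι → ℝ}
    (ha : a ∈ positiveCone ι) (hx : x ∈ positiveCone ι) : ∃ m : ℝ, 0 < m ∧ m • a ≤ x := by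
  cases nonempty_fintype ι
  have hr := maxRatio_pos ha hx
  exact ⟨(maxRatio a x)⁻¹, inv_pos.2 hr, (inv_smul_le_iff_of_pos hr).2 (le_maxRatio_smul hx)⟩

section FixedPoint

variable {ι : Type*} {T : (ι → ℝ) → ι → ℝ} {a x : ι → ℝ} {c : ℝ}

theorem PosHomogeneous.map_smul_fixedPoint (hhom : PosHomogeneous T) (ha : a ∈ positiveCone ι)
    (hfix : T a = a) (hc : 0 < c) : T (c • a) = c • a := by
  rw [hhom hc ha, hfix]

theorem smul_fixedPoint_le_map (hmono : MonotoneOn T (positiveCone ι)) (hhom : PosHomogeneous T)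
    (ha : a ∈ positiveCone ι) (hfix : T a = a) (hc : 0 < c) (hcx : c • a ≤ x) :
    c • a ≤ T x := by
  have hca := smul_mem_positiveCone hc ha
  simpa only [hhom.map_smul_fixedPoint ha hfix hc] using
    hmono hca (mem_positiveCone_of_le hca hcx) hcx

theorem smul_fixedPoint_le_iterate (hmono : MonotoneOn T (positiveCone ι))
    (hhom : PosHomogeneous T) (ha : a ∈ positiveCone ι) (hfix : T a = a) (hc : 0 < c)
    (hcx : c • a ≤ x) (k : ℕ) : c • a ≤ T^[k] x :=
  MapsTo.iterate (s := Ici (c • a))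
    (fun _ => smul_fixedPoint_le_map hmono hhom ha hfix hc) k hcx

theorem mapsTo_positiveCone_of_fixedPoint [Finite ι] [Nonempty ι]
    (hmono : MonotoneOn T (positiveCone ι)) (hhom : PosHomogeneous T)
    (ha : a ∈ positiveCone ι) (hfix : T a = a) :
    MapsTo T (positiveCone ι) (positiveCone ι) := by
  intro x hx
  obtain ⟨m, hm, hmx⟩ := exists_pos_smul_le ha hx
  exact mem_positiveCone_of_le (smul_mem_positiveCone hm ha)
    (smul_fixedPoint_le_map hmono hhom ha hfix hm hmx)

section Fintype

variable [Fintype ι] [Nonempty ι]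

theorem maxRatio_map_le (hmono : MonotoneOn T (positiveCone ι)) (hhom : PosHomogeneous T)
    (ha : a ∈ positiveCone ι) (hfix : T a = a) (hx : x ∈ positiveCone ι) :
    maxRatio (T x) a ≤ maxRatio x a := by
  have hr := maxRatio_pos hx ha
  rw [maxRatio_le_iff ha]
  simpa only [hhom.map_smul_fixedPoint ha hfix hr] using
    hmono hx (smul_mem_positiveCone hr ha) (le_maxRatio_smul ha)

theorem antitone_maxRatio_iterate (hmono : MonotoneOn T (positiveCone ι))
    (hhom : PosHomogeneous T) (ha : a ∈ positiveCone ι) (hfix : T a = a)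
    (hx : x ∈ positiveCone ι) : Antitone fun k => maxRatio (T^[k] x) a := by
  refine antitone_nat_of_succ_le fun k => ?_
  rw [Function.iterate_succ_apply']
  exact maxRatio_map_le hmono hhom ha hfix
    ((mapsTo_positiveCone_of_fixedPoint hmono hhom ha hfix).iterate k hx)

theorem maxRatio_map_lt (hhom : PosHomogeneous T) (ha : a ∈ positiveCone ι) (hfix : T a = a)
    (hstrict : ∀ x ∈ positiveCone ι, x < a → StrongLT (T x) (T a))
    (hx : x ∈ positiveCone ι) (hne : x ≠ maxRatio x a • a) :
    maxRatio (T x) a < maxRatio x a := by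
  set r := maxRatio x a
  have hr : 0 < r := maxRatio_pos hx ha
  have hlt : r⁻¹ • x < a :=
    ((inv_smul_le_iff_of_pos hr).2 (le_maxRatio_smul ha)).lt_of_ne
      fun h => hne ((inv_smul_eq_iff₀ hr.ne').1 h)
  have hTlt := hstrict _ (smul_mem_positiveCone (inv_pos.2 hr) hx) hlt
  rw [hhom (inv_pos.2 hr) hx, hfix] at hTlt
  exact (maxRatio_lt_iff ha).2 fun i => (inv_mul_lt_iff₀ hr).1 (hTlt i)

theorem le_maxRatio_map_of_mapClusterPt (hmono : MonotoneOn T (positiveCone ι))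
    (hhom : PosHomogeneous T) (ha : a ∈ positiveCone ι) {κ : Type*} {F : Filter κ}
    {u : κ → ι → ℝ} {y : ι → ℝ} (hu : ∀ k, u k ∈ positiveCone ι) (hy : y ∈ positiveCone ι)
    (hclus : MapClusterPt y F u) (hc : ∀ k, c ≤ maxRatio (T (u k)) a) : c ≤ maxRatio (T y) a := by
  have hbound : ∀ s : ℝ, 1 < s → c ≤ s * maxRatio (T y) a := by
    intro s hs
    have hs0 : 0 < s := one_pos.trans hs
    obtain ⟨k, hk⟩ : ∃ k, u k ≤ s • y :=
      (hclus.frequently (pi_Iic_mem_nhds fun i => lt_mul_of_one_lt_left (hy i) hs)).exists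
    refine (hc k).trans ((maxRatio_le_iff ha).2 ?_)
    calc T (u k) ≤ T (s • y) := hmono (hu k) (smul_mem_positiveCone hs0 hy) hk
      _ = s • T y := hhom hs0 hy
      _ ≤ s • maxRatio (T y) a • a := smul_le_smul_of_nonneg_left (le_maxRatio_smul ha) hs0.le
      _ = (s * maxRatio (T y) a) • a := smul_smul _ _ _
  have hlim : Tendsto (fun s : ℝ => s * maxRatio (T y) a) (𝓝[>] 1) (𝓝 (maxRatio (T y) a)) := by
    simpa only [one_mul] using
      ((continuous_mul_const (maxRatio (T y) a)).tendsto 1).mono_left nhdsWithin_le_nhds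
  exact ge_of_tendsto hlim (eventually_mem_nhdsWithin.mono hbound)

theorem eq_smul_of_mapClusterPt_iterate (hmono : MonotoneOn T (positiveCone ι))
    (hhom : PosHomogeneous T) (ha : a ∈ positiveCone ι) (hfix : T a = a)
    (hstrict : ∀ x ∈ positiveCone ι, x < a → StrongLT (T x) (T a))
    (hx : x ∈ positiveCone ι) (hc : Tendsto (fun k => maxRatio (T^[k] x) a) atTop (𝓝 c))
    {y : ι → ℝ} (hy : y ∈ positiveCone ι) (hclus : MapClusterPt y atTop fun k => T^[k] x) :
    y = c • a := by
  have hyc : maxRatio y a = c := eq_of_nhds_neBot <| ClusterPt.mono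
    (hclus.continuousAt_comp (f := (maxRatio · a)) (continuous_maxRatio_left a).continuousAt) hc
  have hle : c ≤ maxRatio (T y) a := by
    refine le_maxRatio_map_of_mapClusterPt hmono hhom ha
      (fun k => (mapsTo_positiveCone_of_fixedPoint hmono hhom ha hfix).iterate k hx) hy hclus
      fun k => ?_
    rw [← Function.iterate_succ_apply' T]
    exact (antitone_maxRatio_iterate hmono hhom ha hfix hx).le_of_tendsto hc (k + 1)
  by_contra hne
  rw [← hyc] at hle hne
  exact (maxRatio_map_lt hhom ha hfix hstrict hy hne).not_ge hle

end Fintype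

theorem exists_tendsto_iterate_smul_fixedPoint [Finite ι] [Nonempty ι]
    (hmono : MonotoneOn T (positiveCone ι)) (hhom : PosHomogeneous T)
    (ha : a ∈ positiveCone ι) (hfix : T a = a)
    (hstrict : ∀ x ∈ positiveCone ι, x < a → StrongLT (T x) (T a)) (hx : x ∈ positiveCone ι) :
    ∃ c : ℝ, 0 < c ∧ Tendsto (fun k => T^[k] x) atTop (𝓝 (c • a)) := by
  cases nonempty_fintype ι
  obtain ⟨m, hm, hmx⟩ := exists_pos_smul_le ha hx
  have hlower := smul_fixedPoint_le_iterate hmono hhom ha hfix hm hmx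
  have hanti := antitone_maxRatio_iterate hmono hhom ha hfix hx
  have hratio : ∀ k, m ≤ maxRatio (T^[k] x) a := by
    intro k
    obtain ⟨i⟩ := ‹Nonempty ι›
    exact le_of_mul_le_mul_right ((hlower k i).trans (le_maxRatio_smul ha i)) (ha i)
  obtain ⟨c, hc⟩ : ∃ c, Tendsto (fun k => maxRatio (T^[k] x) a) atTop (𝓝 c) :=
    ⟨_, tendsto_atTop_ciInf hanti ⟨m, forall_mem_range.2 hratio⟩⟩
  have hmem : ∀ k, T^[k] x ∈ Icc (m • a) (maxRatio x a • a) := fun k =>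
    ⟨hlower k, (maxRatio_le_iff ha).1 (hanti (Nat.zero_le k))⟩
  refine ⟨c, hm.trans_le (ge_of_tendsto' hc hratio),
    isCompact_Icc.tendsto_nhds_of_unique_mapClusterPt (.of_forall hmem) fun y hy hclus => ?_⟩
  exact eq_smul_of_mapClusterPt_iterate hmono hhom ha hfix hstrict hx hc
    (mem_positiveCone_of_le (smul_mem_positiveCone hm ha) hy.1) hclus

end FixedPoint

section Normalization

variable {ι : Type*} [Fintype ι] {v : ι → ℝ}

theorem l1Normalize_smul {c : ℝ} (hc : 0 < c) (v : ι → ℝ) :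
    l1Normalize (c • v) = l1Normalize v := by
  ext i
  simp only [l1Normalize, Pi.smul_apply, smul_eq_mul, abs_mul, abs_of_pos hc, ← Finset.mul_sum]
  exact mul_div_mul_left _ _ hc.ne'

theorem l1Normalize_eq_smul (v : ι → ℝ) : l1Normalize v = (∑ j, |v j|)⁻¹ • v :=
  funext fun _ => div_eq_inv_mul _ _

theorem l1Normalize_eq_self (hv : v ∈ positiveCone ι) (hsum : ∑ i, v i = 1) :
    l1Normalize v = v := by
  simp only [l1Normalize_eq_smul, abs_of_pos (hv _), hsum, inv_one, one_smul]

variable [Nonempty ι]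

theorem sum_abs_pos (hv : v ∈ positiveCone ι) : 0 < ∑ j, |v j| :=
  Finset.sum_pos (fun j _ => abs_pos.2 (hv j).ne') Finset.univ_nonempty

theorem continuousAt_l1Normalize (hv : v ∈ positiveCone ι) : ContinuousAt l1Normalize v :=
  continuousAt_pi.2 fun i => (continuous_apply i).continuousAt.div
    (continuous_finsetSum _ fun j _ => (continuous_apply j).abs).continuousAt (sum_abs_pos hv).ne'

theorem l1Normalize_map_l1Normalize {T : (ι → ℝ) → ι → ℝ} (hhom : PosHomogeneous T)
    (hv : v ∈ positiveCone ι) : l1Normalize (T (l1Normalize v)) = l1Normalize (T v) := by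
  have hs := inv_pos.2 (sum_abs_pos hv)
  rw [l1Normalize_eq_smul v, hhom hs hv, l1Normalize_smul hs]

theorem iterate_l1Normalize_comp {T : (ι → ℝ) → ι → ℝ} (hhom : PosHomogeneous T)
    (hmaps : MapsTo T (positiveCone ι) (positiveCone ι)) (hv : v ∈ positiveCone ι) (k : ℕ) :
    (l1Normalize ∘ T)^[k + 1] v = l1Normalize (T^[k + 1] v) := by
  induction k with
  | zero => rfl
  | succ k ih =>
    rw [Function.iterate_succ_apply', ih, Function.iterate_succ_apply' T (k + 1)]
    exact l1Normalize_map_l1Normalize hhom (hmaps.iterate (k + 1) hv)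

end Normalization

theorem stmt_14_general {ι : Type*} [Fintype ι] [Nonempty ι] {φ : (ι → ℝ) → ι → ℝ}
    (hmono : MonotoneOn φ (positiveCone ι)) (hhom : PosHomogeneous φ)
    {a : ι → ℝ} (ha : a ∈ positiveCone ι) (hsum : ∑ i, a i = 1)
    (hstrict : ∀ x ∈ positiveCone ι, x < a → StrongLT (φ x) (φ a))
    {l : ℝ} (hl : 0 < l) (heig : φ a = l • a) {x : ι → ℝ} (hx : x ∈ positiveCone ι) :
    Tendsto (fun k => (l1Normalize ∘ φ)^[k] x) atTop (𝓝 a) := by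
  have hl' := inv_pos.2 hl
  let T := l⁻¹ • φ
  have hTmono : MonotoneOn T (positiveCone ι) := fun y hy z hz hyz =>
    smul_le_smul_of_nonneg_left (hmono hy hz hyz) hl'.le
  have hThom : PosHomogeneous T := fun c hc y hy => by
    simp only [T, Pi.smul_apply, hhom hc hy, smul_comm c]
  have hTfix : T a = a := by simp only [T, Pi.smul_apply, heig, inv_smul_smul₀ hl.ne']
  have hTstrict : ∀ y ∈ positiveCone ι, y < a → StrongLT (T y) (T a) := fun y hy hya i =>
    mul_lt_mul_of_pos_left (hstrict y hy hya i) hl'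
  have hnormalize : l1Normalize ∘ φ = l1Normalize ∘ T :=
    funext fun y => (l1Normalize_smul hl' (φ y)).symm
  obtain ⟨c, hc, hlim⟩ :=
    exists_tendsto_iterate_smul_fixedPoint hTmono hThom ha hTfix hTstrict hx
  have hlimN := (continuousAt_l1Normalize (smul_mem_positiveCone hc ha)).tendsto.comp hlim
  rw [l1Normalize_smul hc, l1Normalize_eq_self ha hsum] at hlimN
  rw [hnormalize, ← tendsto_add_atTop_iff_nat 1]
  exact ((tendsto_add_atTop_iff_nat 1).2 hlimN).congr fun k => (iterate_l1Normalize_comp hThom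
    (mapsTo_positiveCone_of_fixedPoint hTmono hThom ha hTfix) hx k).symm

/-- Corollary 4.6, abstract form: for a continuous, positively
homogeneous, strongly monotone self-map `φ` of the positive cone having an
eigenvector `α*` in the open unit simplex, the normalized iteration
`ψ(s) = φ(s)/‖φ(s)‖₁` converges to `α*` from every starting point in the open
unit simplex. -/
theorem stmt_14
    (n : ℕ) [NeZero n]
    (φ : (Fin n → ℝ) → Fin n → ℝ)
    (hmaps : ∀ x : Fin n → ℝ, (∀ i, 0 < x i) → ∀ i, 0 < φ x i)
    (hcont : ContinuousOn φ {x : Fin n → ℝ | ∀ i, 0 < x i})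
    (hhom : ∀ l : ℝ, 0 < l → ∀ x : Fin n → ℝ, (∀ i, 0 < x i) →
      φ (fun i => l * x i) = fun i => l * φ x i)
    (hsmono : ∀ x y : Fin n → ℝ, (∀ i, 0 < x i) → (∀ i, 0 < y i) →
      (∀ i, x i ≤ y i) → x ≠ y → ∀ i, φ x i < φ y i)
    (ψ : (Fin n → ℝ) → Fin n → ℝ)
    (hψ : ∀ x : Fin n → ℝ, ψ x = fun i => φ x i / ∑ j, |φ x j|)
    (αstar : Fin n → ℝ) (hαstarpos : ∀ i, 0 < αstar i)
    (hαstarsum : ∑ i, αstar i = 1)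
    (lstar : ℝ) (hlstar : 0 < lstar)
    (heig : φ αstar = fun i => lstar * αstar i) :
    ∀ α₀ : Fin n → ℝ, (∀ i, 0 < α₀ i) → ∑ i, α₀ i = 1 →
      Tendsto (fun k => ψ^[k] α₀) atTop (𝓝 αstar) := by
  intro α₀ hα₀ _
  have hmono : MonotoneOn φ (positiveCone (Fin n)) := fun x hx y hy hxy =>
    hxy.eq_or_lt.elim (fun h => h ▸ le_rfl) fun h => StrongLT.le (hsmono x y hx hy hxy h.ne)
  obtain rfl : ψ = l1Normalize ∘ φ := funext hψ
  exact stmt_14_general hmono hhom hαstarpos hαstarsum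
    (fun x hx h => hsmono x αstar hx hαstarpos h.le h.ne) hlstar heig hα₀
end
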